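/- arXiv:1512.02278 — 2 statements merged into one kernel-verified Lean document; each statement's English description precedes it below -/
import Mathlib

section
/- For every integer k ≥ 1, the coefficient C_{k+1,1} satisfies the alternative recurrence C_{k+1,1} = Σ_{ℓ=1}^{k} ε_ℓ · A^{(ℓ−1)}_{k+1,ℓ} · C_{ℓ,1}, where C_{1,1} = 1. -/
open Finset

/-- Product of adjacency factors along a path `ℓ → j₁ → ⋯ → jₚ → k`:
for each consecutive pair `(a, b)` in the list, a factor `A^{(a-1)}_{b,a}`. -/
def pathProd {R : Type*} [CommRing R] (A : ℕ → ℕ → ℕ → R) : List ℕ → R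
  | [] => 1
  | [_] => 1
  | a :: b :: rest => A (a - 1) b a * pathProd A (b :: rest)

/-- The quantity `𝒜_{k,ℓ}(Q)` for a subset `Q = {j₁ < ⋯ < jₚ} ⊆ {ℓ+1,…,k−1}`. -/
def calA {R : Type*} [CommRing R] (ε : ℕ → R) (A : ℕ → ℕ → ℕ → R)
    (k ℓ : ℕ) (Q : Finset ℕ) : R :=
  (ε ℓ * ∏ j ∈ Q, ε j) * pathProd A (ℓ :: ((Q.sort (· ≤ ·)) ++ [k]))

/-- The coefficients `C_{k,ℓ}`: `C_{k,k} = 1` and, for `k > ℓ`,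
`C_{k,ℓ} = Σ_{Q ⊆ {ℓ+1,…,k−1}} 𝒜_{k,ℓ}(Q)`. -/
def Cgen {R : Type*} [CommRing R] (ε : ℕ → R) (A : ℕ → ℕ → ℕ → R) (k ℓ : ℕ) : R :=
  if k = ℓ then 1 else ∑ Q ∈ (Finset.Ioo ℓ k).powerset, calA ε A k ℓ Q

/-- The modified weight `λ̂ₖ = Σ_{ℓ=1}^{k} C_{k,ℓ} λ_ℓ`. -/
def lamHat {R : Type*} [CommRing R] (ε : ℕ → R) (A : ℕ → ℕ → ℕ → R)
    (lam : ℕ → R) (k : ℕ) : R :=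
  ∑ ℓ ∈ Finset.Icc 1 k, Cgen ε A k ℓ * lam ℓ

theorem pathProd_append_pair {R : Type*} [CommRing R] (A : ℕ → ℕ → ℕ → R) (a b : ℕ) :
    ∀ L : List ℕ, pathProd A (L ++ [a, b]) = A (a - 1) b a * pathProd A (L ++ [a])
  | [] => by simp [pathProd]
  | [c] => by simp [pathProd, mul_comm]
  | c :: d :: L => by
    have ih := pathProd_append_pair A a b (d :: L)
    simp only [List.cons_append] at ih
    simp only [List.cons_append, pathProd, ih, mul_left_comm]

theorem Finset.sort_insert_of_forall_lt {α : Type*} [LinearOrder α] {s : Finset α} {a : α}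
    (h : ∀ b ∈ s, b < a) :
    (insert a s).sort (· ≤ ·) = s.sort (· ≤ ·) ++ [a] := by
  have ha : a ∉ s := fun hs => lt_irrefl a (h a hs)
  have hnodup : (s.sort (· ≤ ·) ++ [a]).Nodup := by simpa [List.nodup_append] using ha
  have hsort : (s.sort (· ≤ ·) ++ [a]).Pairwise (· ≤ ·) := by
    rw [List.pairwise_append]
    refine ⟨s.pairwise_sort _, List.pairwise_singleton _ _, fun b hb c hc => ?_⟩
    rw [List.mem_singleton.1 hc]
    exact (h b ((Finset.mem_sort _).1 hb)).le
  rw [← (List.toFinset_sort (· ≤ ·) hnodup).2 hsort]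
  congr 1
  ext b
  simp

theorem calA_insert {R : Type*} [CommRing R] (ε : ℕ → R) (A : ℕ → ℕ → ℕ → R)
    (k ℓ m : ℕ) {Q : Finset ℕ} (hQ : ∀ j ∈ Q, j < m) :
    calA ε A k ℓ (insert m Q) = ε m * A (m - 1) k m * calA ε A m ℓ Q := by
  have hm : m ∉ Q := fun h => lt_irrefl m (hQ m h)
  have hpath := pathProd_append_pair A m k (ℓ :: Q.sort (· ≤ ·))
  simp only [List.cons_append] at hpath
  simp only [calA, Finset.prod_insert hm, Finset.sort_insert_of_forall_lt hQ,
    List.append_assoc, List.singleton_append, hpath]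
  ring

/-- Splitting the subsets of `{ℓ+1,…,n}` by their largest element; the endpoint `k` is arbitrary. -/
theorem sum_calA_eq_sum_Cgen {R : Type*} [CommRing R] (ε : ℕ → R) (A : ℕ → ℕ → ℕ → R)
    (k ℓ n : ℕ) (hn : ℓ ≤ n) :
    ∑ Q ∈ (Finset.Ioo ℓ (n + 1)).powerset, calA ε A k ℓ Q =
      ∑ m ∈ Finset.Icc ℓ n, ε m * A (m - 1) k m * Cgen ε A m ℓ := by
  induction n, hn using Nat.le_induction with
  | base =>
    have hIoo : Finset.Ioo ℓ (ℓ + 1) = ∅ := by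
      ext j
      simp only [Finset.mem_Ioo, Finset.notMem_empty, iff_false]
      omega
    simp [hIoo, calA, Cgen, pathProd]
  | succ n hn ih =>
    have hIoo : Finset.Ioo ℓ (n + 1 + 1) = insert (n + 1) (Finset.Ioo ℓ (n + 1)) := by
      ext j
      simp only [Finset.mem_Ioo, Finset.mem_insert]
      omega
    rw [hIoo, Finset.sum_powerset_insert (by simp), ih, Finset.sum_Icc_succ_top (by omega)]
    congr 1
    rw [Cgen, if_neg (by omega), Finset.mul_sum]
    refine Finset.sum_congr rfl fun Q hQ => calA_insert ε A k ℓ (n + 1) fun j hj => ?_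
    exact (Finset.mem_Ioo.1 (Finset.mem_powerset.1 hQ hj)).2

/-- For every integer `k ≥ 1`,
`C_{k+1,1} = Σ_{ℓ=1}^{k} ε_ℓ · A^{(ℓ−1)}_{k+1,ℓ} · C_{ℓ,1}` (where `C_{1,1} = 1`). -/
theorem C_succ_one_recurrence {R : Type*} [CommRing R] (ε : ℕ → R) (A : ℕ → ℕ → ℕ → R)
    (k : ℕ) (hk : 1 ≤ k) :
    Cgen ε A (k + 1) 1 = ∑ ℓ ∈ Finset.Icc 1 k, ε ℓ * A (ℓ - 1) (k + 1) ℓ * Cgen ε A ℓ 1 := by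
  rw [Cgen, if_neg (by omega), sum_calA_eq_sum_Cgen ε A (k + 1) 1 k hk]
end

section
/- The spanning-subset expansion P solves the ordered contraction–deletion recurrence in its first edge: P(λ_1,…,λ_n) = α(λ_1) · P^c(λ_2 + ε A^{(0)}_{2,1} λ_1, …, λ_n + ε A^{(0)}_{n,1} λ_1) + β(λ_1) · P^d(λ_2 + ε′ A^{(0)}_{2,1} λ_1, …, λ_n + ε′ A^{(0)}_{n,1} λ_1), where P^c (respectively P^d) is the polynomial defined by exactly the same construction on the index set {2,…,n} (with its induced order), with the same ε, ε′, q, α, β, and with the data κ^c(B′) = κ(B′ ∪ {1}) and (A^c)_{B′}^{(m)} = A_{B′∪{1}}^{(m+1)} (respectively κ^d(B′) = κ(B′) and (A^d)_{B′}^{(m)} = A_{B′}^{(m+1)}) for B′ ⊆ {2,…,n}. -/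
open Finset

/-- The `B`-dependent ordering parameters: `ε^B_j = ε` if `j ∈ B` and `ε′` otherwise. -/
def epsB {R : Type*} [CommRing R] (ε ε' : R) (B : Finset ℕ) : ℕ → R :=
  fun j => if j ∈ B then ε else ε'

/-- The order-dependent generalized Tutte polynomial
`P(λ₁,…,λₙ) = Σ_{B ⊆ {1,…,n}} q^{κ(B)} ∏_{j=1}^{n} γ^j_B(λ̂_{j;B}(λ₁,…,λ_j))`,
where `γ^j_B = α` if `j ∈ B` and `β` otherwise, and
`λ̂_{k;B} = Σ_{ℓ=1}^{k} C_{k,ℓ;B} λ_ℓ` is built from the parameters `ε^B` and the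
adjacency data `A_B`. -/
def genP {R : Type*} [CommRing R] (ε ε' q : R) (α β : R → R) (n : ℕ)
    (κ : Finset ℕ → ℕ) (A : Finset ℕ → ℕ → ℕ → ℕ → R) (lam : ℕ → R) : R :=
  ∑ B ∈ (Finset.Icc 1 n).powerset, q ^ κ B *
    ∏ j ∈ Finset.Icc 1 n,
      (if j ∈ B then α else β) (lamHat (epsB ε ε' B) (A B) lam j)

/-- A sum over subsets of `{1,…,n+1}`, split according to whether the subset contains `1`. -/
theorem sum_powerset_Icc_one_add_one {M : Type*} [AddCommMonoid M] (n : ℕ) (f : Finset ℕ → M) :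
    ∑ B ∈ (Icc 1 (n + 1)).powerset, f B
      = ∑ B ∈ (Icc 1 n).powerset, f (insert 1 (B.image (· + 1)))
        + ∑ B ∈ (Icc 1 n).powerset, f (B.image (· + 1)) := by
  have hinj : Function.Injective fun B : Finset ℕ => B.image (· + 1) :=
    image_injective (add_left_injective 1)
  rw [← insert_Icc_add_one_left_eq_Icc (show 1 ≤ n + 1 by omega),
    sum_powerset_insert (by simp), ← image_add_right_Icc, powerset_image,
    sum_image hinj.injOn, sum_image hinj.injOn, add_comm]

theorem prod_Icc_one_add_one {M : Type*} [CommMonoid M] (n : ℕ) (f : ℕ → M) :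
    ∏ j ∈ Icc 1 (n + 1), f j = f 1 * ∏ j ∈ Icc 1 n, f (j + 1) := by
  rw [← insert_Icc_add_one_left_eq_Icc (show 1 ≤ n + 1 by omega), prod_insert (by simp),
    ← image_add_right_Icc, prod_image (add_left_injective 1).injOn]

theorem sum_Icc_one_add_one {M : Type*} [AddCommMonoid M] (n : ℕ) (f : ℕ → M) :
    ∑ j ∈ Icc 1 (n + 1), f j = f 1 + ∑ j ∈ Icc 1 n, f (j + 1) := by
  rw [← insert_Icc_add_one_left_eq_Icc (show 1 ≤ n + 1 by omega), sum_insert (by simp),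
    ← image_add_right_Icc, sum_image (add_left_injective 1).injOn]

section Coefficients

variable {R : Type*} [CommRing R] (e : ℕ → R) (A : ℕ → ℕ → ℕ → R)

theorem calA_empty (k ℓ : ℕ) : calA e A k ℓ ∅ = e ℓ * A (ℓ - 1) k ℓ := by
  simp [calA, pathProd]

/-- Adjoining a new smallest intermediate vertex `m` splits off the first step of the path. -/
theorem calA_insert_of_lt {k ℓ m : ℕ} {Q : Finset ℕ} (hQ : ∀ j ∈ Q, m < j) :
    calA e A k ℓ (insert m Q) = calA e A k m Q * (e ℓ * A (ℓ - 1) m ℓ) := by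
  have hm : m ∉ Q := fun h => lt_irrefl m (hQ m h)
  have hsort : (insert m Q).sort (· ≤ ·) = m :: Q.sort (· ≤ ·) :=
    sort_insert _ (fun j hj => (hQ j hj).le) hm
  simp only [calA, hsort, prod_insert hm, List.cons_append, pathProd]
  ring

theorem Cgen_self (k : ℕ) : Cgen e A k k = 1 := if_pos rfl

/-- Expansion of the sum over paths with all intermediate vertices beyond `a`
by the first vertex reached. -/
theorem sum_calA_powerset_Ioo {k ℓ a : ℕ} (hak : a < k) :
    ∑ Q ∈ (Ioo a k).powerset, calA e A k ℓ Q
      = ∑ m ∈ Ioc a k, Cgen e A k m * (e ℓ * A (ℓ - 1) m ℓ) := by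
  obtain ⟨d, rfl⟩ := Nat.exists_eq_add_of_lt hak
  induction d generalizing a with
  | zero =>
    have hIoo : Ioo a (a + 0 + 1) = ∅ := by ext; simp
    have hIoc : Ioc a (a + 0 + 1) = {a + 1} := by ext; simp
    rw [hIoo, hIoc]
    simp [calA_empty, Cgen_self]
  | succ d ih =>
    have hk : a + (d + 1) + 1 = (a + 1) + d + 1 := by omega
    rw [hk]
    have hIoo : Ioo a (a + 1 + d + 1) = insert (a + 1) (Ioo (a + 1) (a + 1 + d + 1)) := by
      ext; simp only [mem_Ioo, mem_insert]; omega
    have hne : a + 1 + d + 1 ≠ a + 1 := by omega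
    rw [hIoo, sum_powerset_insert (by simp), ih (by omega),
      ← insert_Ioc_add_one_left_eq_Ioc (show a < a + 1 + d + 1 by omega),
      sum_insert (by simp), add_comm, Cgen, if_neg hne, sum_mul]
    congr 1
    refine sum_congr rfl fun Q hQ => calA_insert_of_lt e A fun j hj => ?_
    exact (mem_Ioo.1 (mem_powerset.1 hQ hj)).1

/-- First-step recursion for the coefficients `C_{k,ℓ}`. -/
theorem Cgen_eq_sum_Ioc {k ℓ : ℕ} (h : ℓ < k) :
    Cgen e A k ℓ = ∑ m ∈ Ioc ℓ k, Cgen e A k m * (e ℓ * A (ℓ - 1) m ℓ) := by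
  rw [Cgen, if_neg h.ne', sum_calA_powerset_Ioo e A h]

/-- The coefficients are compatible with the relabelling `j ↦ j + 1`. -/
theorem Cgen_add_one {e' : ℕ → R} (he : ∀ j, 1 ≤ j → e (j + 1) = e' j)
    {k ℓ : ℕ} (hℓ : 1 ≤ ℓ) (h : ℓ ≤ k) :
    Cgen e A (k + 1) (ℓ + 1)
      = Cgen e' (fun m i j => A (m + 1) (i + 1) (j + 1)) k ℓ := by
  induction hd : k - ℓ using Nat.strong_induction_on generalizing ℓ with
  | _ d ih =>
    rcases h.eq_or_lt with rfl | hlt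
    · simp only [Cgen_self]
    · rw [Cgen_eq_sum_Ioc _ _ hlt, Cgen_eq_sum_Ioc _ _ (Nat.add_lt_add_right hlt 1),
        ← image_add_right_Ioc, sum_image (add_left_injective 1).injOn]
      refine sum_congr rfl fun m hm => ?_
      obtain ⟨hℓm, hmk⟩ := mem_Ioc.1 hm
      rw [ih (k - m) (by omega) (by omega) hmk rfl, he ℓ hℓ, Nat.sub_add_cancel hℓ, Nat.add_sub_cancel]

theorem lamHat_one (lam : ℕ → R) : lamHat e A lam 1 = lam 1 := by
  simp [lamHat, Cgen_self]

/-- The first weight can be absorbed into the remaining ones. -/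
theorem lamHat_add_one {e' : ℕ → R} (he : ∀ j, 1 ≤ j → e (j + 1) = e' j)
    (lam : ℕ → R) {k : ℕ} (hk : 1 ≤ k) :
    lamHat e A lam (k + 1)
      = lamHat e' (fun m i j => A (m + 1) (i + 1) (j + 1))
          (fun j => lam (j + 1) + e 1 * A 0 (j + 1) 1 * lam 1) k := by
  have hIoc : Ioc 1 (k + 1) = (Icc 1 k).image (· + 1) := by
    ext j; simp; omega
  have hfirst : Cgen e A (k + 1) 1 * lam 1
      = ∑ j ∈ Icc 1 k, Cgen e A (k + 1) (j + 1) * (e 1 * A 0 (j + 1) 1 * lam 1) := by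
    rw [Cgen_eq_sum_Ioc e A (by omega), hIoc, sum_image (add_left_injective 1).injOn, sum_mul]
    exact sum_congr rfl fun j _ => by rw [mul_assoc, Nat.sub_self]
  rw [lamHat, sum_Icc_one_add_one, hfirst, ← sum_add_distrib, lamHat]
  refine sum_congr rfl fun j hj => ?_
  obtain ⟨h1j, hjk⟩ := mem_Icc.1 hj
  rw [← Cgen_add_one e A he h1j hjk]
  ring

end Coefficients

/-- The factor `1` splits off the product of weights attached to `S ⊆ {1,…,n+1}`; what remains is
the product attached to the set `B` that corresponds to `S ∖ {1}` under `j ↦ j + 1`. -/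
theorem prod_lamHat_add_one {R : Type*} [CommRing R] (ε ε' : R) (α β : R → R) (n : ℕ)
    (A : ℕ → ℕ → ℕ → R) (lam : ℕ → R) {S B : Finset ℕ}
    (hSB : ∀ j, 1 ≤ j → (j + 1 ∈ S ↔ j ∈ B)) :
    ∏ j ∈ Icc 1 (n + 1), (if j ∈ S then α else β) (lamHat (epsB ε ε' S) A lam j)
      = (if 1 ∈ S then α else β) (lam 1) *
          ∏ j ∈ Icc 1 n, (if j ∈ B then α else β)
            (lamHat (epsB ε ε' B) (fun m k ℓ => A (m + 1) (k + 1) (ℓ + 1))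
              (fun j => lam (j + 1) + epsB ε ε' S 1 * A 0 (j + 1) 1 * lam 1) j) := by
  have he (j : ℕ) (hj : 1 ≤ j) : epsB ε ε' S (j + 1) = epsB ε ε' B j := by
    simp only [epsB, hSB j hj]
  rw [prod_Icc_one_add_one, lamHat_one]
  congr 1
  refine prod_congr rfl fun j hj => ?_
  have h1j := (mem_Icc.1 hj).1
  rw [lamHat_add_one _ _ he lam h1j]
  simp only [hSB j h1j]

/-- The spanning-subset expansion `P` solves the ordered
contraction–deletion recurrence in its first edge:
`P(λ₁,…,λₙ) = α(λ₁) · Pᶜ(λ₂ + ε A^{(0)}_{2,1} λ₁, …, λₙ + ε A^{(0)}_{n,1} λ₁)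
            + β(λ₁) · Pᵈ(λ₂ + ε′ A^{(0)}_{2,1} λ₁, …, λₙ + ε′ A^{(0)}_{n,1} λ₁)`,
where `Pᶜ` (resp. `Pᵈ`) is the polynomial given by the same construction on the index set
`{2,…,n}` with its induced order — here relabelled to `{1,…,n−1}` via the order isomorphism
`j ↦ j+1` — with the same `ε, ε′, q, α, β`, and data `κᶜ(B′) = κ(B′ ∪ {1})`,
`(Aᶜ)_{B′}^{(m)} = A_{B′∪{1}}^{(m+1)}` (resp. `κᵈ(B′) = κ(B′)`,
`(Aᵈ)_{B′}^{(m)} = A_{B′}^{(m+1)}`). The hypothesis `hA` states that `A_B^{(m)}` depends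
only on `B ∩ {1,…,m}`; in particular `A^{(0)} = A_∅^{(0)}` is independent of `B`. -/
theorem genP_first_edge_recurrence {R : Type*} [CommRing R]
    (ε ε' q : R) (α β : R → R) (n : ℕ) (hn : 1 ≤ n)
    (κ : Finset ℕ → ℕ) (A : Finset ℕ → ℕ → ℕ → ℕ → R)
    (hA : ∀ (B B' : Finset ℕ) (m : ℕ),
      B ∩ Finset.Icc 1 m = B' ∩ Finset.Icc 1 m → A B m = A B' m)
    (lam : ℕ → R) :
    genP ε ε' q α β n κ A lam
      = α (lam 1) *
          genP ε ε' q α β (n - 1)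
            (fun B' => κ (insert 1 (B'.image (· + 1))))
            (fun B' m k ℓ => A (insert 1 (B'.image (· + 1))) (m + 1) (k + 1) (ℓ + 1))
            (fun j => lam (j + 1) + ε * A ∅ 0 (j + 1) 1 * lam 1)
        + β (lam 1) *
            genP ε ε' q α β (n - 1)
              (fun B' => κ (B'.image (· + 1)))
              (fun B' m k ℓ => A (B'.image (· + 1)) (m + 1) (k + 1) (ℓ + 1))
              (fun j => lam (j + 1) + ε' * A ∅ 0 (j + 1) 1 * lam 1) := by
  obtain ⟨n, rfl⟩ := Nat.exists_eq_add_of_le' hn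
  have hA0 (B : Finset ℕ) : A B 0 = A ∅ 0 := hA B ∅ 0 (by simp)
  rw [genP, sum_powerset_Icc_one_add_one, Nat.add_sub_cancel, genP, genP, mul_sum, mul_sum]
  congr 1 <;> refine sum_congr rfl fun B hB => ?_
  · have h1 : 1 ∈ insert 1 (B.image (· + 1)) := mem_insert_self _ _
    rw [prod_lamHat_add_one (B := B) _ _ _ _ _ _ _ (fun j hj => by simp; omega), if_pos h1,
      hA0, epsB, if_pos h1, mul_left_comm]
  · have h1 : 1 ∉ B.image (· + 1) := by
      intro h
      obtain ⟨j, hj, hj1⟩ := mem_image.1 h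
      have := (mem_Icc.1 (mem_powerset.1 hB hj)).1
      omega
    rw [prod_lamHat_add_one (B := B) _ _ _ _ _ _ _ (fun j hj => by simp), if_neg h1,
      hA0, epsB, if_neg h1, mul_left_comm]
end
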